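/- Let t : ℕ → ℕ be a t-vector with t_i = 0 for all i > 6, satisfying ∑_{i≥2} C(i,2)·t_i = C(n,2) (so t_2 + 3t_3 + 6t_4 + 10t_5 + 15t_6 = C(n,2)) and the simplicial Melchior equality t_2 = 3 + t_4 + 2t_5 + 3t_6. Then t_4 is not congruent to 2 modulo 3. -/

import Mathlib

lemma choose_two_mod_three (n : ℕ) :
    (n % 3 = 0 ∧ n.choose 2 % 3 = 0) ∨ (n % 3 = 1 ∧ n.choose 2 % 3 = 0) ∨
      (n % 3 = 2 ∧ n.choose 2 % 3 = 1) := by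
  induction n with
  | zero => simp
  | succ k ih =>
    have h : (k + 1).choose 2 = k + k.choose 2 := by
      rw [Nat.choose_succ_succ' k 1, Nat.choose_one_right]
    omega

theorem stmt_3 (n : ℕ) (t : ℕ → ℕ)
    (hsupp : ∀ i, 6 < i → t i = 0)
    (hpair : t 2 + 3 * t 3 + 6 * t 4 + 10 * t 5 + 15 * t 6 = Nat.choose n 2)
    (hmel : t 2 = 3 + t 4 + 2 * t 5 + 3 * t 6) :
    ¬ (t 4 % 3 = 2) := by
  have h := choose_two_mod_three n
  omega
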